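/- For every γ ∈ (0,1) there exist constants c, c', c₀ > 0 and n₀ (depending only on γ) such that for all integers 1 ≤ k < n with n ≥ n₀, there exists a pair of finitely supported random variables U, U' taking values in [0,1) satisfying: (i) Pr[U ≠ 1/n] ≤ γ·k/n; (ii) Pr[U' = 0] > 1/3 and Pr[U' = 2/n] > 1/3; (iii) almost surely U ≤ c'·(log n)²/√(kn) and U' ≤ c'·(log n)²/√(kn); (iv) E[U] = E[U'] and |E[U] − 1/n| ≤ c₀·√(k/n)/n; (v) E[U^t] = E[U'^t] for every integer 1 ≤ t ≤ c·log n. -/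

import Mathlib

open MeasureTheory

lemma mm_fact (M K : ℕ) (h : M ≤ K) (I : ℕ) :
    (M + I).factorial * K.factorial ≤ M.factorial * (K + I).factorial := by
  induction I with
  | zero => simp
  | succ I ih =>
    rw [← add_assoc, ← add_assoc, Nat.factorial_succ, Nat.factorial_succ]
    calc (M + I + 1) * (M + I).factorial * K.factorial
        = (M + I + 1) * ((M + I).factorial * K.factorial) := by ring
      _ ≤ (K + I + 1) * (M.factorial * (K + I).factorial) := by gcongr
      _ = _ := by ring

lemma mm_base (i : ℕ) :
    (∏ j ∈ Finset.range i, |(((i : ℝ) + 1) ^ 2 - ((j : ℝ) + 1) ^ 2)|) * ((i + 1).factorial : ℝ)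
      = (i.factorial : ℝ) * ((2 * i + 1).factorial : ℝ) := by
  have h1 : ∏ j ∈ Finset.range i, |(((i : ℝ) + 1) ^ 2 - ((j : ℝ) + 1) ^ 2)|
      = (i.descFactorial i : ℝ) * ((i + 2).ascFactorial i : ℝ) := by
    rw [Nat.descFactorial_eq_prod_range, Nat.ascFactorial_eq_prod_range]
    push_cast
    rw [← Finset.prod_mul_distrib]
    apply Finset.prod_congr rfl
    intro j hj
    have hj' : j < i := Finset.mem_range.mp hj
    rw [Nat.cast_sub hj'.le]
    have : (j : ℝ) ≤ i := by exact_mod_cast hj'.le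
    rw [abs_of_nonneg (by nlinarith [(Nat.cast_nonneg j : (0:ℝ) ≤ j)])]
    ring
  rw [h1, Nat.descFactorial_self]
  have := Nat.factorial_mul_ascFactorial (i + 1) i
  rw [show i + 1 + i = 2 * i + 1 by ring] at this
  rw [← this]
  push_cast
  ring

lemma mm_comb (i M : ℕ) :
    (∏ j ∈ Finset.range (i + 1 + M), if j = i then (1 : ℝ) else
        |(((i : ℝ) + 1) ^ 2 - ((j : ℝ) + 1) ^ 2)|) * (2 * ((i + 1 + M).factorial : ℝ) ^ 2)
      = (∏ j ∈ Finset.range (i + 1 + M), if j = i then (1 : ℝ) else ((j : ℝ) + 1) ^ 2)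
        * (M.factorial * (2 * i + 2 + M).factorial) := by
  induction M with
  | zero =>
    rw [add_zero, Finset.prod_range_succ, Finset.prod_range_succ, if_pos rfl, if_pos rfl]
    have e1 : (∏ j ∈ Finset.range i, if j = i then (1 : ℝ) else
        |(((i : ℝ) + 1) ^ 2 - ((j : ℝ) + 1) ^ 2)|) =
        ∏ j ∈ Finset.range i, |(((i : ℝ) + 1) ^ 2 - ((j : ℝ) + 1) ^ 2)| :=
      Finset.prod_congr rfl fun j hj => if_neg (Finset.mem_range.mp hj).ne
    have e2 : (∏ j ∈ Finset.range i, if j = i then (1 : ℝ) else ((j : ℝ) + 1) ^ 2) =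
        (i.factorial : ℝ) ^ 2 := by
      rw [← Finset.prod_range_add_one_eq_factorial]
      push_cast
      rw [← Finset.prod_pow]
      exact Finset.prod_congr rfl fun j hj => if_neg (Finset.mem_range.mp hj).ne
    rw [e1, e2]
    have h := mm_base i
    have h3 : ((2 * i + 2).factorial : ℝ) = 2 * (i + 1) * (2 * i + 1).factorial := by
      rw [Nat.factorial_succ]; push_cast; ring
    have h4 : ((i + 1).factorial : ℝ) = (i + 1) * i.factorial := by
      rw [Nat.factorial_succ]; push_cast; ring
    rw [add_zero, h3]
    calc _ = (∏ j ∈ Finset.range i, |(((i : ℝ) + 1) ^ 2 - ((j : ℝ) + 1) ^ 2)|) *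
          ((i + 1).factorial : ℝ) * (2 * ((i + 1).factorial : ℝ)) := by ring
      _ = _ := by rw [h, h4]; simp; ring
  | succ M ih =>
    rw [← add_assoc, ← add_assoc, Finset.prod_range_succ, Finset.prod_range_succ,
      if_neg (by omega), if_neg (by omega)]
    have ha : |(((i : ℝ) + 1) ^ 2 - (((i + 1 + M : ℕ) : ℝ) + 1) ^ 2)| =
        ((M : ℝ) + 1) * (2 * i + 2 + M + 1) := by
      rw [abs_of_nonpos]
      · push_cast; ring
      · have : (0:ℝ) ≤ i := Nat.cast_nonneg i
        have : (0:ℝ) ≤ M := Nat.cast_nonneg M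
        push_cast; nlinarith
    rw [ha, Nat.factorial_succ, Nat.factorial_succ, Nat.factorial_succ]
    have := congrArg (fun z => z * (((i + 1 + M : ℕ) : ℝ) + 1) ^ 2 * ((M + 1) * (2 * i + 2 + M + 1))) ih
    push_cast at this ⊢
    linear_combination this

lemma mm_prod (N i : ℕ) (hi : i < N) :
    (∏ j ∈ Finset.range N, if j = i then (1 : ℝ) else ((j : ℝ) + 1) ^ 2) ≤
    2 * ∏ j ∈ Finset.range N, if j = i then (1 : ℝ) else
        |(((i : ℝ) + 1) ^ 2 - ((j : ℝ) + 1) ^ 2)| := by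
  obtain ⟨M, rfl⟩ : ∃ M, N = i + 1 + M := ⟨N - (i + 1), by omega⟩
  have h := mm_comb i M
  have h2 := mm_fact M (M + (i + 1)) (by omega) (i + 1)
  rw [show M + (i + 1) = i + 1 + M by ring, show i + 1 + M + (i + 1) = 2 * i + 2 + M by ring] at h2
  have h2' : ((i + 1 + M).factorial : ℝ) ^ 2 ≤ M.factorial * (2 * i + 2 + M).factorial := by
    rw [sq]; exact_mod_cast h2
  set a := ∏ j ∈ Finset.range (i + 1 + M), if j = i then (1 : ℝ) else ((j : ℝ) + 1) ^ 2
  have ha : 0 ≤ a := Finset.prod_nonneg fun j _ => by split_ifs <;> positivity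
  have hp : (0:ℝ) < ((i + 1 + M).factorial : ℝ) ^ 2 := by positivity
  have := mul_le_mul_of_nonneg_left h2' ha
  rw [← h] at this
  refine le_of_mul_le_mul_right ?_ hp
  linarith

lemma mm_prob (m : ℕ) (x p q : ℕ → ℝ) (hp : ∀ i, 0 ≤ p i) (hq : ∀ i, 0 ≤ q i)
    (hp1 : ∑ i ∈ Finset.range m, p i = 1) (hq1 : ∑ i ∈ Finset.range m, q i = 1) :
    ∃ (Ω : Type) (mΩ : MeasurableSpace Ω) (P : Measure Ω)
      (_ : IsProbabilityMeasure P) (U U' : Ω → ℝ),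
      (∀ ω, ∃ i < m, U ω = x i) ∧ (∀ ω, ∃ i < m, U' ω = x i) ∧
      Measurable U ∧ Measurable U' ∧ (Set.range U).Finite ∧ (Set.range U').Finite ∧
      (∀ f : ℝ → ℝ, ∫ ω, f (U ω) ∂P = ∑ i ∈ Finset.range m, p i * f (x i)) ∧
      (∀ f : ℝ → ℝ, ∫ ω, f (U' ω) ∂P = ∑ i ∈ Finset.range m, q i * f (x i)) ∧
      (∀ S : Set ℝ, P {ω | U ω ∈ S} =
        ENNReal.ofReal (∑ i ∈ Finset.range m, p i * S.indicator 1 (x i))) ∧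
      (∀ S : Set ℝ, P {ω | U' ω ∈ S} =
        ENNReal.ofReal (∑ i ∈ Finset.range m, q i * S.indicator 1 (x i))) := by
  rw [Finset.sum_range] at hp1 hq1
  have hs : ∑ a : Fin m × Fin m, ENNReal.ofReal (p a.1 * q a.2) = 1 := by
    rw [← ENNReal.ofReal_sum_of_nonneg (fun a _ => mul_nonneg (hp _) (hq _)),
      Fintype.sum_prod_type]
    simp [← Finset.mul_sum, hp1, hq1]
  let _ : MeasurableSpace (Fin m × Fin m) := ⊤
  have : DiscreteMeasurableSpace (Fin m × Fin m) := ⟨fun _ => trivial⟩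
  have key : ∀ g : Fin m × Fin m → ℝ,
      ∫ ω, g ω ∂(PMF.ofFintype _ hs).toMeasure = ∑ i : Fin m, ∑ j : Fin m, p i * q j * g (i, j) := by
    intro g
    rw [PMF.integral_eq_sum, Fintype.sum_prod_type]
    refine Finset.sum_congr rfl fun i _ => Finset.sum_congr rfl fun j _ => ?_
    rw [PMF.ofFintype_apply, ENNReal.toReal_ofReal (mul_nonneg (hp _) (hq _)), smul_eq_mul]
  have k1 : ∀ f : ℝ → ℝ, ∫ ω, f (x (ω.1 : Fin m)) ∂(PMF.ofFintype _ hs).toMeasure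
      = ∑ i ∈ Finset.range m, p i * f (x i) := by
    intro f
    rw [key, Finset.sum_range]
    refine Finset.sum_congr rfl fun i _ => ?_
    dsimp only
    rw [← Finset.sum_mul, ← Finset.mul_sum, hq1, mul_one]
  have k2 : ∀ f : ℝ → ℝ, ∫ ω, f (x (ω.2 : Fin m)) ∂(PMF.ofFintype _ hs).toMeasure
      = ∑ i ∈ Finset.range m, q i * f (x i) := by
    intro f
    rw [key, Finset.sum_comm, Finset.sum_range]
    refine Finset.sum_congr rfl fun i _ => ?_
    dsimp only
    rw [← Finset.sum_mul, ← Finset.sum_mul, hp1, one_mul]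
  refine ⟨Fin m × Fin m, ⊤, (PMF.ofFintype _ hs).toMeasure, inferInstance,
    fun a => x a.1, fun a => x a.2,
    fun a => ⟨_, a.1.2, rfl⟩, fun a => ⟨_, a.2.2, rfl⟩,
    Measurable.of_discrete, Measurable.of_discrete,
    Set.finite_range _, Set.finite_range _, k1, k2, ?_, ?_⟩
  · intro S
    rw [← k1, ← ofReal_measureReal]
    congr 1
    rw [← integral_indicator_one (MeasurableSet.of_discrete)]
    rfl
  · intro S
    rw [← k2, ← ofReal_measureReal]
    congr 1
    rw [← integral_indicator_one (MeasurableSet.of_discrete)]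
    rfl

lemma mm_sum (N : ℕ) : ∑ j ∈ Finset.range N, 1 / ((j : ℝ) + 1) ^ 2 ≤ 2 := by
  have h : ∀ N : ℕ, ∑ j ∈ Finset.range (N + 1), 1 / ((j : ℝ) + 1) ^ 2 ≤ 2 - 1 / ((N : ℝ) + 1) := by
    intro N
    induction N with
    | zero => norm_num
    | succ N ih =>
      rw [Finset.sum_range_succ]
      have : 1 / (((N + 1 : ℕ) : ℝ) + 1) ^ 2 ≤ 1 / ((N : ℝ) + 1) - 1 / (((N + 1 : ℕ) : ℝ) + 1) := by
        have : (0:ℝ) ≤ N := Nat.cast_nonneg N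
        push_cast
        rw [div_sub_div _ _ (by positivity) (by positivity),
          div_le_div_iff₀ (by positivity) (by positivity)]
        nlinarith
      linarith
  cases N with
  | zero => norm_num
  | succ N =>
    have := h N
    have : (0:ℝ) ≤ 1 / ((N : ℝ) + 1) := by positivity
    linarith

lemma mm_one_sub (N : ℕ) (a : ℕ → ℝ) (h0 : ∀ j, 0 ≤ a j) (h1 : ∀ j, a j ≤ 1) :
    1 - ∑ j ∈ Finset.range N, a j ≤ ∏ j ∈ Finset.range N, (1 - a j) := by
  induction N with
  | zero => simp
  | succ N ih =>
    rw [Finset.sum_range_succ, Finset.prod_range_succ]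
    have hle : ∏ j ∈ Finset.range N, (1 - a j) ≤ 1 :=
      Finset.prod_le_one (fun j _ => by linarith [h1 j]) (fun j _ => by linarith [h0 j])
    nlinarith [h0 N, h1 N]

/-- The interpolation nodes. -/
noncomputable def mmNode (A : ℝ) : ℕ → ℝ
  | 0 => 0
  | 1 => 1
  | 2 => 2
  | (j + 3) => A * ((j : ℝ) + 1) ^ 2

lemma mmNode_strictMono (A : ℝ) (hA : 10 ≤ A) : StrictMono (mmNode A) := by
  apply strictMono_nat_of_lt_succ
  intro n
  match n with
  | 0 => simp [mmNode]
  | 1 => simp [mmNode]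
  | 2 => simp [mmNode]; linarith
  | (j + 3) =>
    simp only [mmNode]
    push_cast
    have : (0:ℝ) ≤ j := Nat.cast_nonneg j
    apply mul_lt_mul_of_pos_left _ (by linarith)
    nlinarith

/-- The denominators of divided differences. -/
noncomputable def mmD (A : ℝ) (N i : ℕ) : ℝ :=
  ∏ j ∈ Finset.range (N + 3), if j = i then (1 : ℝ) else mmNode A i - mmNode A j

lemma mmD_eq (A : ℝ) (N i : ℕ) :
    mmD A N i = ∏ j ∈ (Finset.range (N + 3)).erase i, (mmNode A i - mmNode A j) := by
  unfold mmD
  rw [← Finset.prod_filter_mul_prod_filter_not _ (fun j => j = i)]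
  rw [Finset.prod_congr rfl (g := fun _ => (1:ℝ)), Finset.prod_const_one, one_mul]
  · have : (Finset.range (N + 3)).filter (fun j => ¬ j = i) = (Finset.range (N + 3)).erase i := by
      ext; simp [and_comm]
    rw [this]
    exact Finset.prod_congr rfl fun j hj => if_neg (Finset.ne_of_mem_erase hj)
  · intro j hj
    exact if_pos (Finset.mem_filter.mp hj).2

lemma mm_moment (A : ℝ) (hA : 10 ≤ A) (N t : ℕ) (ht : t ≤ N + 1) :
    ∑ i ∈ Finset.range (N + 3), mmNode A i ^ t / mmD A N i = 0 := by
  have h := Lagrange.coeff_eq_sum (s := Finset.range (N + 3)) (v := mmNode A)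
    (P := (Polynomial.X ^ t : Polynomial ℝ)) ((mmNode_strictMono A hA).injective.injOn)
    (by rw [Polynomial.degree_X_pow, Finset.card_range]; norm_cast; omega)
  rw [Finset.card_range, Polynomial.coeff_X_pow, if_neg (by omega)] at h
  rw [h]
  refine Finset.sum_congr rfl fun i _ => ?_
  rw [mmD_eq]; simp

lemma mm_weights (A : ℝ) (hA : 10 ≤ A) (N : ℕ) :
    ∃ u : ℕ → ℝ, (∀ t ≤ N + 1, ∑ i ∈ Finset.range (N + 3), u i * mmNode A i ^ t = 0) ∧
      u 1 = 1 ∧ u 0 ≤ - (1 / 2) * (1 - 2 / A) ∧ u 2 ≤ - (1 / 2) ∧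
      ∀ j < N, |u (j + 3)| ≤ 4 / (A ^ 2 * ((j : ℝ) + 1) ^ 4) := by
  have hX : ∀ j : ℕ, 10 ≤ A * ((j : ℝ) + 1) ^ 2 := by
    intro j
    have : (0:ℝ) ≤ j := Nat.cast_nonneg j
    nlinarith [mul_nonneg (by linarith : 0 ≤ A) this]
  have D0 : mmD A N 0 = (∏ j ∈ Finset.range N, (0 - A * ((j : ℝ) + 1) ^ 2)) * 2 := by
    simp [mmD, Finset.prod_range_succ', mmNode] <;> ring
  have D1 : mmD A N 1 = (∏ j ∈ Finset.range N, (1 - A * ((j : ℝ) + 1) ^ 2)) * (-1) := by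
    simp [mmD, Finset.prod_range_succ', mmNode] <;> ring
  have D2 : mmD A N 2 = (∏ j ∈ Finset.range N, (2 - A * ((j : ℝ) + 1) ^ 2)) * 2 := by
    simp [mmD, Finset.prod_range_succ', mmNode] <;> ring
  have D3 : ∀ i, mmD A N (i + 3) = (∏ j ∈ Finset.range N, if j = i then (1 : ℝ) else
      A * ((i : ℝ) + 1) ^ 2 - A * ((j : ℝ) + 1) ^ 2) *
      ((A * ((i : ℝ) + 1) ^ 2 - 2) * (A * ((i : ℝ) + 1) ^ 2 - 1) * (A * ((i : ℝ) + 1) ^ 2)) := by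
    intro i
    simp [mmD, Finset.prod_range_succ', mmNode] <;> ring
  have D1ne : mmD A N 1 ≠ 0 := by
    rw [D1]
    refine mul_ne_zero (Finset.prod_ne_zero_iff.mpr fun j _ => ?_) (by norm_num)
    linarith [hX j]
  refine ⟨fun i => mmD A N 1 / mmD A N i, ?_, div_self D1ne, ?_, ?_, ?_⟩
  · intro t ht
    have h := mm_moment A hA N t ht
    rw [← mul_zero (mmD A N 1), ← h, Finset.mul_sum]
    exact Finset.sum_congr rfl fun i _ => by ring
  · have e : mmD A N 1 / mmD A N 0 =
        - (1 / 2) * ∏ j ∈ Finset.range N, (1 - 1 / A * (1 / ((j : ℝ) + 1) ^ 2)) := by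
      rw [D0, D1, mul_div_mul_comm, ← Finset.prod_div_distrib, mul_comm]
      congr 1
      · norm_num
      · refine Finset.prod_congr rfl fun j _ => ?_
        have := hX j
        have : A ≠ 0 := by linarith
        field_simp
        ring
    dsimp only
    rw [e]
    have h1 := mm_one_sub N (fun j => 1 / A * (1 / ((j : ℝ) + 1) ^ 2))
      (fun j => by positivity) (fun j => by
        have := hX j
        rw [one_div_mul_one_div, div_le_one (by linarith)]; linarith)
    rw [← Finset.mul_sum] at h1
    have h2 := mul_le_mul_of_nonneg_left (mm_sum N) (by positivity : 0 ≤ 1 / A)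
    have h3 : 1 / A * 2 = 2 / A := by ring
    linarith
  · have e : mmD A N 1 / mmD A N 2 =
        - (1 / 2) * ∏ j ∈ Finset.range N,
          ((A * ((j : ℝ) + 1) ^ 2 - 1) / (A * ((j : ℝ) + 1) ^ 2 - 2)) := by
      rw [D2, D1, mul_div_mul_comm, ← Finset.prod_div_distrib, mul_comm]
      congr 1
      · norm_num
      · refine Finset.prod_congr rfl fun j _ => ?_
        rw [← neg_div_neg_eq]; congr 1 <;> ring
    dsimp only
    rw [e]
    have : 1 ≤ ∏ j ∈ Finset.range N,
          ((A * ((j : ℝ) + 1) ^ 2 - 1) / (A * ((j : ℝ) + 1) ^ 2 - 2)) := by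
      refine Finset.one_le_prod fun j _ => ?_
      have := hX j
      rw [one_le_div (by linarith)]; linarith
    linarith
  · intro i hi
    have hA0 : 0 < A := by linarith
    have hXi := hX i
    set X := A * ((i : ℝ) + 1) ^ 2 with hXdef
    set Q := ∏ j ∈ Finset.range N, if j = i then (1 : ℝ) else
        |(((i : ℝ) + 1) ^ 2 - ((j : ℝ) + 1) ^ 2)| with hQ
    set R := ∏ j ∈ Finset.range N, if j = i then (1 : ℝ) else ((j : ℝ) + 1) ^ 2 with hR
    set B := ∏ j ∈ Finset.range N, if j = i then (1 : ℝ) else A with hB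
    have hB0 : 0 < B := Finset.prod_pos fun j _ => by split_ifs <;> linarith
    have hRQ : R ≤ 2 * Q := mm_prod N i hi
    have hR0 : 0 < R := Finset.prod_pos fun j _ => by split_ifs <;> positivity
    have hQ0 : 0 < Q := by linarith
    have h3 : |mmD A N (i + 3)| = B * Q * ((X - 2) * (X - 1) * X) := by
      rw [D3, abs_mul, Finset.abs_prod, ← Finset.prod_mul_distrib]
      congr 1
      · refine Finset.prod_congr rfl fun j _ => ?_
        split_ifs
        · simp
        · rw [← mul_sub, abs_mul, abs_of_pos hA0]
      · apply abs_of_nonneg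
        have : 0 ≤ X - 2 := by linarith
        have : 0 ≤ X - 1 := by linarith
        positivity
    have h1 : |mmD A N 1| ≤ (X - 1) * (B * R) := by
      have : |mmD A N 1| = (∏ j ∈ Finset.range N, if j = i then (X - 1) else 1) *
          ∏ j ∈ Finset.range N, if j = i then (1 : ℝ) else (A * ((j : ℝ) + 1) ^ 2 - 1) := by
        rw [D1, abs_mul, Finset.abs_prod, ← Finset.prod_mul_distrib]
        simp only [abs_neg, abs_one, mul_one]
        refine Finset.prod_congr rfl fun j _ => ?_
        rw [abs_of_nonpos (by linarith [hX j])]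
        split_ifs with h
        · subst h; rw [hXdef]; ring
        · ring
      rw [this, Finset.prod_ite_eq', if_pos (Finset.mem_range.mpr hi), ← Finset.prod_mul_distrib]
      apply mul_le_mul_of_nonneg_left _ (by linarith)
      refine Finset.prod_le_prod (fun j _ => ?_) (fun j _ => ?_)
      · split_ifs
        · norm_num
        · linarith [hX j]
      · split_ifs
        · norm_num
        · linarith [hX j]
    have hpos : 0 < B * Q * ((X - 2) * (X - 1) * X) := by
      have : 0 < X - 2 := by linarith
      have : 0 < X - 1 := by linarith
      positivity
    have hX2 : A ^ 2 * ((i : ℝ) + 1) ^ 4 = X ^ 2 := by rw [hXdef]; ring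
    rw [abs_div, h3, hX2, div_le_div_iff₀ hpos (by positivity)]
    calc |mmD A N 1| * X ^ 2 ≤ (X - 1) * (B * (2 * Q)) * X ^ 2 := by
          refine mul_le_mul_of_nonneg_right (h1.trans ?_) (by positivity)
          refine mul_le_mul_of_nonneg_left ?_ (by linarith)
          exact mul_le_mul_of_nonneg_left hRQ hB0.le
      _ = (B * Q * (X - 1) * X) * (2 * X) := by ring
      _ ≤ (B * Q * (X - 1) * X) * (4 * (X - 2)) := by
          refine mul_le_mul_of_nonneg_left (by linarith) ?_
          have : 0 < X - 1 := by linarith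
          positivity
      _ = _ := by ring

lemma mm_pq (A : ℝ) (hA : 10 ≤ A) (N : ℕ) :
    ∃ p q : ℕ → ℝ, (∀ i, 0 ≤ p i) ∧ (∀ i, 0 ≤ q i) ∧
      ∑ i ∈ Finset.range (N + 3), p i = 1 ∧ ∑ i ∈ Finset.range (N + 3), q i = 1 ∧
      (∀ t ≤ N + 1, ∑ i ∈ Finset.range (N + 3), p i * mmNode A i ^ t =
        ∑ i ∈ Finset.range (N + 3), q i * mmNode A i ^ t) ∧
      p 0 = 0 ∧ p 2 = 0 ∧ 1 / 3 < q 0 ∧ 1 / 3 < q 2 ∧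
      ∑ j ∈ Finset.range N, p (j + 3) ≤ 8 / A ^ 2 ∧
      |∑ i ∈ Finset.range (N + 3), p i * mmNode A i - 1| ≤ 8 / A := by
  obtain ⟨u, hu, h1, h0, h2, h3⟩ := mm_weights A hA N
  have hA0 : 0 < A := by linarith
  have hA2 : 2 / A ≤ 1 / 5 := by rw [div_le_div_iff₀] <;> linarith
  have hA8 : 8 / A ^ 2 ≤ 8 / 100 := by
    apply div_le_div_of_nonneg_left <;> nlinarith
  set S := ∑ i ∈ Finset.range (N + 3), max (u i) 0 with hS
  have hS' : ∑ i ∈ Finset.range (N + 3), max (-u i) 0 = S := by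
    have h := hu 0 (by omega)
    rw [hS, ← sub_eq_zero, ← neg_eq_zero]
    refine Eq.trans ?_ h
    rw [← Finset.sum_sub_distrib, ← Finset.sum_neg_distrib]
    refine Finset.sum_congr rfl fun i _ => ?_
    rcases le_total (u i) 0 with h | h
    · rw [max_eq_left (by linarith), max_eq_right h]; ring
    · rw [max_eq_right (by linarith), max_eq_left h]; ring
  have hSeq : S = ∑ j ∈ Finset.range N, max (u (j + 3)) 0 + 1 := by
    rw [hS, Finset.sum_range_succ', Finset.sum_range_succ', Finset.sum_range_succ']
    norm_num [h1, add_assoc]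
    rw [max_eq_right (by linarith), max_eq_right (by linarith)]; ring
  have hT0 : 0 ≤ ∑ j ∈ Finset.range N, max (u (j + 3)) 0 :=
    Finset.sum_nonneg fun j _ => le_max_right _ _
  have hterm : ∀ j < N, max (u (j + 3)) 0 ≤ 4 / A ^ 2 * (1 / ((j : ℝ) + 1) ^ 4) := by
    intro j hj
    have h := h3 j hj
    rw [div_mul_div_comm, mul_one]
    exact max_le ((le_abs_self _).trans h) (by positivity)
  have hT : ∑ j ∈ Finset.range N, max (u (j + 3)) 0 ≤ 8 / A ^ 2 := by
    calc _ ≤ ∑ j ∈ Finset.range N, 4 / A ^ 2 * (1 / ((j : ℝ) + 1) ^ 2) := by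
          refine Finset.sum_le_sum fun j hj => (hterm j (Finset.mem_range.mp hj)).trans ?_
          refine mul_le_mul_of_nonneg_left ?_ (by positivity)
          apply one_div_le_one_div_of_le (by positivity)
          apply pow_le_pow_right₀ _ (by norm_num)
          linarith [(Nat.cast_nonneg j : (0:ℝ) ≤ j)]
      _ ≤ 4 / A ^ 2 * 2 := by
          rw [← Finset.mul_sum]
          exact mul_le_mul_of_nonneg_left (mm_sum N) (by positivity)
      _ = _ := by ring
  have hS1 : 1 ≤ S := by linarith
  have hS0 : 0 < S := by linarith
  have hpS : ∀ i, max (u i) 0 / S ≤ max (u i) 0 := fun i => div_le_self (le_max_right _ _) hS1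
  have hsum1 : ∑ i ∈ Finset.range (N + 3), max (u i) 0 / S = 1 := by
    rw [← Finset.sum_div, ← hS, div_self hS0.ne']
  have hp0 : max (u 0) 0 / S = 0 := by rw [max_eq_right (by linarith), zero_div]
  have hp2 : max (u 2) 0 / S = 0 := by rw [max_eq_right (by linarith), zero_div]
  refine ⟨fun i => max (u i) 0 / S, fun i => max (-u i) 0 / S,
    fun i => div_nonneg (le_max_right _ _) hS0.le, fun i => div_nonneg (le_max_right _ _) hS0.le,
    hsum1, ?_, ?_, hp0, hp2, ?_, ?_, ?_, ?_⟩
  · rw [← Finset.sum_div, hS', div_self hS0.ne']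
  · intro t ht
    rw [← sub_eq_zero, ← Finset.sum_sub_distrib]
    refine Eq.trans ?_ (zero_div S)
    rw [← hu t ht, Finset.sum_div]
    simp only [hu t ht]
    refine Finset.sum_congr rfl fun i _ => ?_
    rcases le_total (u i) 0 with h | h
    · rw [max_eq_left (by linarith : 0 ≤ -u i), max_eq_right h]; ring
    · rw [max_eq_right (by linarith : -u i ≤ 0), max_eq_left h]; ring
  · rw [lt_div_iff₀ hS0]
    refine lt_of_lt_of_le ?_ (le_max_left _ _)
    linarith
  · rw [lt_div_iff₀ hS0]
    refine lt_of_lt_of_le ?_ (le_max_left _ _)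
    linarith
  · exact (Finset.sum_le_sum fun j _ => hpS _).trans hT
  · have e : ∑ i ∈ Finset.range (N + 3), max (u i) 0 / S * mmNode A i - 1 =
        ∑ j ∈ Finset.range N, max (u (j + 3)) 0 / S * (A * ((j : ℝ) + 1) ^ 2 - 1) := by
      refine (congrArg (fun z => ∑ i ∈ Finset.range (N + 3), max (u i) 0 / S * mmNode A i - z)
        hsum1.symm).trans ?_
      rw [← Finset.sum_sub_distrib, Finset.sum_range_succ', Finset.sum_range_succ',
        Finset.sum_range_succ']
      simp only [zero_add, Nat.reduceAdd, hp0, hp2, mmNode, add_assoc]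
      simp [mul_sub]
    have hXj : ∀ j : ℕ, 0 ≤ A * ((j : ℝ) + 1) ^ 2 - 1 := by
      intro j
      have : (0:ℝ) ≤ j := Nat.cast_nonneg j
      nlinarith [mul_nonneg hA0.le this]
    rw [e, abs_of_nonneg (Finset.sum_nonneg fun j _ =>
      mul_nonneg (div_nonneg (le_max_right _ _) hS0.le) (hXj j))]
    calc _ ≤ ∑ j ∈ Finset.range N, 4 / A * (1 / ((j : ℝ) + 1) ^ 2) := by
          refine Finset.sum_le_sum fun j hj => ?_
          calc _ ≤ 4 / A ^ 2 * (1 / ((j : ℝ) + 1) ^ 4) * (A * ((j : ℝ) + 1) ^ 2) :=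
                mul_le_mul ((hpS _).trans (hterm j (Finset.mem_range.mp hj))) (by linarith)
                  (hXj j) (by positivity)
            _ = _ := by field_simp
      _ ≤ 4 / A * 2 := by
          rw [← Finset.mul_sum]
          exact mul_le_mul_of_nonneg_left (mm_sum N) (by positivity)
      _ = _ := by ring

/-- For every `γ ∈ (0,1)` there exist constants `c, c', c₀ > 0` and a
threshold `n₀` such that for all `1 ≤ k < n` with `n ≥ n₀`, there is a pair of finitely
supported random variables `U, U'` with values in `[0, 1)` satisfying:
(i) `Pr[U ≠ 1/n] ≤ γ k/n`; (ii) `Pr[U' = 0] > 1/3` and `Pr[U' = 2/n] > 1/3`;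
(iii) a.s. `U, U' ≤ c' (log n)²/√(kn)`; (iv) `E[U] = E[U']` and
`|E[U] - 1/n| ≤ c₀ √(k/n)/n`; (v) `E[U^t] = E[U'^t]` for all `1 ≤ t ≤ c log n`. -/
theorem exists_moment_matching_pair (γ : ℝ) (hγ0 : 0 < γ) (hγ1 : γ < 1) :
    ∃ c c' c₀ : ℝ, 0 < c ∧ 0 < c' ∧ 0 < c₀ ∧ ∃ n₀ : ℕ,
      ∀ k n : ℕ, 1 ≤ k → k < n → n₀ ≤ n →
        ∃ (Ω : Type) (mΩ : MeasurableSpace Ω) (P : Measure Ω)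
          (_ : IsProbabilityMeasure P) (U U' : Ω → ℝ),
          Measurable U ∧ Measurable U' ∧
          (Set.range U).Finite ∧ (Set.range U').Finite ∧
          (∀ ω, U ω ∈ Set.Ico (0 : ℝ) 1) ∧ (∀ ω, U' ω ∈ Set.Ico (0 : ℝ) 1) ∧
          P {ω | U ω ≠ 1 / n} ≤ ENNReal.ofReal (γ * k / n) ∧
          ENNReal.ofReal (1 / 3) < P {ω | U' ω = 0} ∧
          ENNReal.ofReal (1 / 3) < P {ω | U' ω = 2 / n} ∧
          (∀ᵐ ω ∂P, U ω ≤ c' * (Real.log n) ^ 2 / Real.sqrt ((k : ℝ) * n)) ∧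
          (∀ᵐ ω ∂P, U' ω ≤ c' * (Real.log n) ^ 2 / Real.sqrt ((k : ℝ) * n)) ∧
          (∫ ω, U ω ∂P) = (∫ ω, U' ω ∂P) ∧
          |(∫ ω, U ω ∂P) - 1 / n| ≤ c₀ * Real.sqrt ((k : ℝ) / n) / n ∧
          (∀ t : ℕ, 1 ≤ t → (t : ℝ) ≤ c * Real.log n →
            (∫ ω, (U ω) ^ t ∂P) = ∫ ω, (U' ω) ^ t ∂P) := by
  have ha : 10 ≤ 10 / γ := by rw [le_div_iff₀ hγ0]; linarith
  set a := 10 / γ with hadef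
  have hev : ∀ᶠ n : ℕ in Filter.atTop, 4 * a * Real.log n ^ 2 < Real.sqrt n := by
    have h1 := (isLittleO_log_rpow_atTop (r := 1 / 4) (by norm_num)).comp_tendsto
      (tendsto_natCast_atTop_atTop (R := ℝ))
    have h2 := h1.def (c := 1 / (4 * a)) (by positivity)
    filter_upwards [h2, Filter.eventually_ge_atTop 3] with n hn hn3
    have hn3' : (3:ℝ) ≤ n := by exact_mod_cast hn3
    have hlog : 0 ≤ Real.log n := Real.log_nonneg (by linarith)
    simp only [Function.comp, Real.norm_eq_abs] at hn
    rw [abs_of_nonneg hlog, abs_of_nonneg (by positivity)] at hn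
    have hq : 0 < (n : ℝ) ^ (1 / 4 : ℝ) := by positivity
    have hsq : ((n : ℝ) ^ (1 / 4 : ℝ)) ^ 2 = Real.sqrt n := by
      rw [← Real.rpow_natCast, ← Real.rpow_mul (by linarith), Real.sqrt_eq_rpow]; norm_num
    rw [← hsq]
    have h4 : 4 * a * Real.log n ≤ (n : ℝ) ^ (1 / 4 : ℝ) := by
      have := mul_le_mul_of_nonneg_left hn (by linarith : 0 ≤ 4 * a)
      rwa [← mul_assoc, mul_one_div_cancel (by linarith), one_mul] at this
    have h5 : Real.log n < (n : ℝ) ^ (1 / 4 : ℝ) := by nlinarith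
    nlinarith
  obtain ⟨n₁, hn₁⟩ := Filter.eventually_atTop.mp hev
  refine ⟨1, 4 * a, 1, one_pos, by linarith, one_pos, max n₁ 3, ?_⟩
  intro k n hk hkn hn
  have hn3 : 3 ≤ n := (le_max_right _ _).trans hn
  have hbig := hn₁ n ((le_max_left _ _).trans hn)
  have hn3' : (3:ℝ) ≤ n := by exact_mod_cast hn3
  have hn0 : (0:ℝ) < n := by linarith
  have hk1 : (1:ℝ) ≤ k := by exact_mod_cast hk
  have hk0 : (0:ℝ) < k := by linarith
  have hkn' : (k:ℝ) ≤ n := by exact_mod_cast hkn.le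
  have hlog1 : 1 ≤ Real.log n := by
    rw [Real.le_log_iff_exp_le hn0]
    linarith [Real.exp_one_lt_d9]
  set N := ⌈Real.log n⌉₊ with hN
  have hN1 : Real.log n ≤ N := Nat.le_ceil _
  have hN2 : (N : ℝ) ≤ 2 * Real.log n := by
    have := Nat.ceil_lt_add_one (by linarith : 0 ≤ Real.log n)
    linarith
  have hNpos : 1 ≤ N := Nat.one_le_iff_ne_zero.mpr (by
    intro h; rw [h] at hN1; norm_num at hN1; linarith)
  set r := Real.sqrt ((n : ℝ) / k) with hr
  have hr1 : 1 ≤ r := by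
    rw [hr, Real.one_le_sqrt, one_le_div hk0]; exact hkn'
  have hr2 : r ^ 2 = n / k := Real.sq_sqrt (by positivity)
  have hrinv : Real.sqrt ((k : ℝ) / n) = 1 / r := by
    rw [hr, ← inv_div, Real.sqrt_inv, one_div]
  have hrs : r * Real.sqrt ((k : ℝ) * n) = n := by
    rw [hr, ← Real.sqrt_mul (by positivity)]
    rw [show (n : ℝ) / k * (k * n) = n ^ 2 by field_simp]
    exact Real.sqrt_sq hn0.le
  have hA : 10 ≤ a * r := by nlinarith
  obtain ⟨p, q, hp, hq, hp1, hq1, hmom, hp0, hp2, hq0, hq2, hT, hmean⟩ := mm_pq (a * r) hA N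
  obtain ⟨Ω, mΩ, P, hP, U, U', hU, hU', mU, mU', fU, fU', iU, iU', sU, sU'⟩ :=
    mm_prob (N + 3) (fun i => mmNode (a * r) i / n) p q hp hq hp1 hq1
  have hsqpos : 0 < Real.sqrt ((k : ℝ) * n) := Real.sqrt_pos.mpr (by positivity)
  have hmono := mmNode_strictMono (a * r) hA
  have hnn : ∀ i, 0 ≤ mmNode (a * r) i / n := fun i =>
    div_nonneg (hmono.monotone (Nat.zero_le i)) hn0.le
  have hbd : ∀ i < N + 3, mmNode (a * r) i / n ≤
      4 * a * Real.log n ^ 2 / Real.sqrt ((k : ℝ) * n) := by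
    intro i hi
    have h1 : mmNode (a * r) i ≤ a * r * (N : ℝ) ^ 2 := by
      obtain ⟨M, hM⟩ : ∃ M, N = M + 1 := ⟨N - 1, by omega⟩
      have : mmNode (a * r) i ≤ mmNode (a * r) (M + 3) := hmono.monotone (by omega)
      refine this.trans_eq ?_
      rw [hM, mmNode]; push_cast; rfl
    have h2 : (N : ℝ) ^ 2 ≤ 4 * Real.log n ^ 2 := by
      have : (N : ℝ) ^ 2 ≤ (2 * Real.log n) ^ 2 := by gcongr
      linarith
    rw [div_le_div_iff₀ hn0 hsqpos]
    calc _ ≤ a * r * (4 * Real.log n ^ 2) * Real.sqrt ((k : ℝ) * n) := by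
          refine mul_le_mul_of_nonneg_right (h1.trans ?_) hsqpos.le
          exact mul_le_mul_of_nonneg_left h2 (by linarith)
      _ = 4 * a * Real.log n ^ 2 * (r * Real.sqrt ((k : ℝ) * n)) := by ring
      _ = _ := by rw [hrs]
  have hlt : 4 * a * Real.log n ^ 2 / Real.sqrt ((k : ℝ) * n) < 1 := by
    rw [div_lt_one hsqpos]
    refine hbig.trans_le (Real.sqrt_le_sqrt ?_)
    nlinarith
  have hmomU : ∀ t ≤ N + 1, ∫ ω, (U ω) ^ t ∂P = ∫ ω, (U' ω) ^ t ∂P := by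
    intro t ht
    rw [iU (fun y => y ^ t), iU' (fun y => y ^ t)]
    have := congrArg (fun z => z / (n : ℝ) ^ t) (hmom t ht)
    simp only [Finset.sum_div] at this
    simpa only [div_pow, mul_div_assoc] using this
  refine ⟨Ω, mΩ, P, hP, U, U', mU, mU', fU, fU', ?_, ?_, ?_, ?_, ?_, ?_, ?_, ?_, ?_, ?_⟩
  · intro ω
    obtain ⟨i, hi, h⟩ := hU ω
    rw [h]
    exact ⟨hnn i, (hbd i hi).trans_lt hlt⟩
  · intro ω
    obtain ⟨i, hi, h⟩ := hU' ω
    rw [h]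
    exact ⟨hnn i, (hbd i hi).trans_lt hlt⟩
  · have h := sU {1 / (n : ℝ)}ᶜ
    have e : {ω | U ω ≠ 1 / n} = {ω | U ω ∈ ({1 / (n : ℝ)}ᶜ : Set ℝ)} := by ext; simp
    rw [e, h]
    apply ENNReal.ofReal_le_ofReal
    rw [Finset.sum_range_succ', Finset.sum_range_succ', Finset.sum_range_succ']
    have h1 : mmNode (a * r) 1 = 1 := rfl
    simp only [zero_add, Nat.reduceAdd, hp0, hp2, zero_mul, add_zero, add_assoc, h1]
    rw [Set.indicator_of_notMem (by simp), mul_zero, add_zero]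
    calc _ ≤ ∑ j ∈ Finset.range N, p (j + 3) := by
          refine Finset.sum_le_sum fun j _ => mul_le_of_le_one_right (hp _) ?_
          exact Set.indicator_le_self' (by intros; exact zero_le_one) _
      _ ≤ 8 / (a * r) ^ 2 := hT
      _ ≤ γ * k / n := by
          rw [mul_pow, hr2, hadef]
          rw [show 8 / ((10 / γ) ^ 2 * ((n : ℝ) / k)) = (8 / 100 * γ) * (γ * k / n) by
            field_simp; norm_num]
          apply mul_le_of_le_one_left (by positivity)
          linarith
  · have h := sU' {0}
    have e : {ω | U' ω = 0} = {ω | U' ω ∈ ({0} : Set ℝ)} := by ext; simp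
    rw [e, h]
    have h1 : q 0 ≤ ∑ i ∈ Finset.range (N + 3),
        q i * ({0} : Set ℝ).indicator 1 (mmNode (a * r) i / n) := by
      have := Finset.single_le_sum
        (f := fun i => q i * ({0} : Set ℝ).indicator (1 : ℝ → ℝ) (mmNode (a * r) i / n))
        (s := Finset.range (N + 3))
        (fun i _ => mul_nonneg (hq i) (Set.indicator_nonneg (fun _ _ => zero_le_one) _))
        (Finset.mem_range.mpr (by omega : 0 < N + 3))
      simpa [mmNode] using this
    exact (ENNReal.ofReal_lt_ofReal_iff (by linarith)).mpr (hq0.trans_le h1)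
  · have h := sU' {2 / (n : ℝ)}
    have e : {ω | U' ω = 2 / n} = {ω | U' ω ∈ ({2 / (n : ℝ)} : Set ℝ)} := by ext; simp
    rw [e, h]
    have h1 : q 2 ≤ ∑ i ∈ Finset.range (N + 3),
        q i * ({2 / (n : ℝ)} : Set ℝ).indicator 1 (mmNode (a * r) i / n) := by
      have := Finset.single_le_sum
        (f := fun i => q i * ({2 / (n : ℝ)} : Set ℝ).indicator (1 : ℝ → ℝ) (mmNode (a * r) i / n))
        (s := Finset.range (N + 3))
        (fun i _ => mul_nonneg (hq i) (Set.indicator_nonneg (fun _ _ => zero_le_one) _))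
        (Finset.mem_range.mpr (by omega : 2 < N + 3))
      simpa [mmNode] using this
    exact (ENNReal.ofReal_lt_ofReal_iff (by linarith)).mpr (hq2.trans_le h1)
  · refine Filter.Eventually.of_forall fun ω => ?_
    obtain ⟨i, hi, h⟩ := hU ω
    rw [h]
    exact hbd i hi
  · refine Filter.Eventually.of_forall fun ω => ?_
    obtain ⟨i, hi, h⟩ := hU' ω
    rw [h]
    exact hbd i hi
  · simpa using hmomU 1 (by omega)
  · have e : ∫ ω, U ω ∂P - 1 / n =
        (∑ i ∈ Finset.range (N + 3), p i * mmNode (a * r) i - 1) / n := by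
      rw [iU (fun y => y), sub_div, Finset.sum_div]
      simp only [mul_div_assoc]
    rw [e, abs_div, abs_of_pos hn0, one_mul, hrinv]
    refine div_le_div_of_nonneg_right (hmean.trans ?_) hn0.le
    rw [div_le_div_iff₀ (by linarith) (by linarith)]
    nlinarith
  · intro t _ ht
    apply hmomU
    have : (t : ℝ) ≤ N := by linarith
    have : t ≤ N := by exact_mod_cast this
    omega
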